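/- Let F be an algebraically closed field, A a finitely generated commutative F-algebra, and n a natural number. Then the map from the quotient of (AlgHom_F(A, F))^n by the permutation action of the symmetric group S_n to AlgHom_F(TS^n_F(A), F), induced by sending an n-tuple of characters (χ_1, …, χ_n) to the restriction to TS^n_F(A) of the F-algebra homomorphism χ_1 ⊗ ⋯ ⊗ χ_n : A^{⊗n} → F, is a well-defined bijection. (Equivalently, the F-points of the n-th symmetric product X^{(n)} = Spec TS^n_F(A) correspond bijectively to equivalence classes of semisimple n-dimensional linear representations of A.) -/

import Mathlib

open scoped TensorProduct
open PiTensorProduct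

universe u v w

namespace SymmetricProduct

variable (F : Type u) [Field F] [IsAlgClosed F] (A : Type v) [CommRing A] [Algebra F A] (n : ℕ)

/-- The algebra homomorphism on the `n`-fold tensor power permuting factors by `σ`. -/
noncomputable def permHom (σ : Equiv.Perm (Fin n)) :
    (⨂[F] _ : Fin n, A) →ₐ[F] (⨂[F] _ : Fin n, A) :=
  PiTensorProduct.liftAlgHom (MultilinearMap.domDomCongr σ (PiTensorProduct.tprod F))
    (by simp [MultilinearMap.domDomCongr_apply]; rfl)
    (fun x y => by
      simp only [MultilinearMap.domDomCongr_apply]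
      rw [tprod_mul_tprod]; rfl)

@[simp] lemma permHom_tprod (σ : Equiv.Perm (Fin n)) (x : Fin n → A) :
    permHom F A n σ (tprod F x) = tprod F (fun i => x (σ i)) := by
  simp [permHom]

/-- `TS^n_F(A)`: the subalgebra of symmetric tensors in the `n`-fold tensor power of `A`. -/
noncomputable def TS : Subalgebra F (⨂[F] _ : Fin n, A) where
  carrier := {x | ∀ σ : Equiv.Perm (Fin n), permHom F A n σ x = x}
  mul_mem' := fun hx hy σ => by rw [_root_.map_mul, hx σ, hy σ]
  add_mem' := fun hx hy σ => by rw [_root_.map_add, hx σ, hy σ]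
  one_mem' := fun σ => map_one _
  algebraMap_mem' := fun r σ => AlgHom.commutes _ r

/-- `e_i^n(a)`: the sum over `i`-element subsets `S` of `Fin n` of the elementary tensors
having `a` in the slots of `S` and `1` elsewhere. -/
noncomputable def esym (i : ℕ) (a : A) : ⨂[F] _ : Fin n, A :=
  ∑ S ∈ Finset.powersetCard i (Finset.univ : Finset (Fin n)),
    tprod F (fun j => if j ∈ S then a else 1)

lemma esym_mem (i : ℕ) (a : A) : esym F A n i a ∈ TS F A n := by
  intro σ
  rw [esym, map_sum]
  simp only [permHom_tprod]
  refine Finset.sum_nbij' (fun S => S.map σ.symm.toEmbedding)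
    (fun S => S.map σ.toEmbedding) ?_ ?_ ?_ ?_ ?_
  · intro S hS
    simp only [Finset.mem_powersetCard_univ, Finset.card_map] at hS ⊢
    exact hS
  · intro S hS
    simp only [Finset.mem_powersetCard_univ, Finset.card_map] at hS ⊢
    exact hS
  · intro S hS
    ext j
    simp
  · intro S hS
    ext j
    simp
  · intro S hS
    congr 1
    funext j
    have hiff : (σ j ∈ S) ↔ (j ∈ Finset.map σ.symm.toEmbedding S) := by
      constructor
      · intro h
        exact Finset.mem_map.2 ⟨σ j, h, σ.symm_apply_apply j⟩
      · intro h
        obtain ⟨s, hs, rfl⟩ := Finset.mem_map.1 h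
        simpa using hs
    simp only [hiff]

/-- `e_i^n(a)` as an element of `TS^n_F(A)`. -/
noncomputable def esymT (i : ℕ) (a : A) : TS F A n := ⟨esym F A n i a, esym_mem F A n i a⟩

lemma tprod_const_mem (a : A) : (tprod F (fun _ : Fin n => a)) ∈ TS F A n := fun σ => by
  simp

/-- `a^{⊗ n}` as an element of `TS^n_F(A)`. -/
noncomputable def tpow (a : A) : TS F A n := ⟨tprod F (fun _ : Fin n => a), tprod_const_mem F A n a⟩


/-- The character `χ_1 ⊗ ⋯ ⊗ χ_n : A^{⊗n} → F` attached to a family of characters of `A`. -/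
noncomputable def tensorChar (χ : Fin n → (A →ₐ[F] F)) : (⨂[F] _ : Fin n, A) →ₐ[F] F :=
  PiTensorProduct.liftAlgHom
    ((MultilinearMap.mkPiAlgebra F (Fin n) F).compLinearMap (fun i => (χ i).toLinearMap))
    (by simp)
    (fun x y => by simp [Finset.prod_mul_distrib])


@[simp] lemma tensorChar_tprod (χ : Fin n → (A →ₐ[F] F)) (x : Fin n → A) :
    tensorChar F A n χ (tprod F x) = ∏ i, χ i (x i) := by
  refine (PiTensorProduct.lift.tprod x).trans ?_
  simp

lemma hom_ext_tprod {S : Type*} [Semiring S] [Algebra F S] {f g : (⨂[F] _ : Fin n, A) →ₐ[F] S}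
    (h : ∀ x : Fin n → A, f (tprod F x) = g (tprod F x)) : f = g :=
  AlgHom.toLinearMap_injective <| PiTensorProduct.ext <| MultilinearMap.ext h

/-- The inclusion of the `i`-th factor. -/
noncomputable def sg (i : Fin n) : A →ₐ[F] (⨂[F] _ : Fin n, A) :=
  singleAlgHom (R := F) (A := fun _ : Fin n => A) i

lemma sg_apply (i : Fin n) (a : A) : sg F A n i a =
    PiTensorProduct.tprod F (Pi.mulSingle (M := fun _ : Fin n => A) i a) := rfl

lemma permHom_one : permHom F A n 1 = AlgHom.id F _ := by
  refine hom_ext_tprod F A n fun x => ?_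
  simp

lemma permHom_permHom (σ τ : Equiv.Perm (Fin n)) (x : ⨂[F] _ : Fin n, A) :
    permHom F A n σ (permHom F A n τ x) = permHom F A n (τ * σ) x := by
  have : (permHom F A n σ).comp (permHom F A n τ) = permHom F A n (τ * σ) := by
    refine hom_ext_tprod F A n fun x => ?_
    simp
  exact DFunLike.congr_fun this x

/-- The permutation action. -/
@[reducible] noncomputable def permAct :
    MulSemiringAction (Equiv.Perm (Fin n)) (⨂[F] _ : Fin n, A) where
  smul σ x := permHom F A n σ⁻¹ x
  one_smul x := by
    change permHom F A n 1⁻¹ x = x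
    rw [inv_one, permHom_one]; rfl
  mul_smul σ τ x := by
    change permHom F A n (σ * τ)⁻¹ x = permHom F A n σ⁻¹ (permHom F A n τ⁻¹ x)
    rw [permHom_permHom, mul_inv_rev]
  smul_zero σ := map_zero (permHom F A n σ⁻¹)
  smul_add σ := map_add (permHom F A n σ⁻¹)
  smul_one σ := map_one (permHom F A n σ⁻¹)
  smul_mul σ := map_mul (permHom F A n σ⁻¹)

attribute [local instance] permAct

lemma perm_smul_def (σ : Equiv.Perm (Fin n)) (x : ⨂[F] _ : Fin n, A) :
    σ • x = permHom F A n σ⁻¹ x := rfl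

lemma permInv : Algebra.IsInvariant (TS F A n) (⨂[F] _ : Fin n, A) (Equiv.Perm (Fin n)) where
  isInvariant b hb := ⟨⟨b, fun σ => by simpa [perm_smul_def] using hb σ⁻¹⟩, rfl⟩

lemma permComm : SMulCommClass (Equiv.Perm (Fin n)) (TS F A n) (⨂[F] _ : Fin n, A) where
  smul_comm σ s x := by
    rw [perm_smul_def, perm_smul_def, Algebra.smul_def, Algebra.smul_def, map_mul]
    congr 1
    exact s.2 σ⁻¹

lemma eq_of_ker_le {B : Type*} [CommRing B] [Algebra F B] (f g : B →ₐ[F] F)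
    (h : ∀ x, f x = 0 → g x = 0) : f = g := by
  ext x
  have := h (x - algebraMap F B (f x)) (by simp)
  rw [map_sub, AlgHom.commutes, sub_eq_zero] at this
  exact this.symm

lemma tensorChar_single (χ : Fin n → (A →ₐ[F] F)) (i : Fin n) (a : A) :
    tensorChar F A n χ (sg F A n i a) = χ i a := by
  rw [sg_apply, tensorChar_tprod, Finset.prod_eq_single i]
  · simp
  · intro j _ hj
    simp [Pi.mulSingle, hj]
  · simp

lemma eq_tensorChar (ψ : (⨂[F] _ : Fin n, A) →ₐ[F] F) :
    tensorChar F A n (fun i => ψ.comp (sg F A n i)) = ψ := by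
  refine PiTensorProduct.algHom_ext fun i => AlgHom.ext fun a => ?_
  exact tensorChar_single F A n _ i a

lemma tensorChar_perm (χ : Fin n → (A →ₐ[F] F)) (σ : Equiv.Perm (Fin n)) :
    (tensorChar F A n χ).comp (permHom F A n σ) = tensorChar F A n (χ ∘ σ.symm) := by
  refine hom_ext_tprod F A n fun x => ?_
  rw [AlgHom.comp_apply, permHom_tprod, tensorChar_tprod, tensorChar_tprod,
    ← Equiv.prod_comp σ.symm]
  simp

lemma exists_ext (φ : TS F A n →ₐ[F] F) :
    ∃ ψ : (⨂[F] _ : Fin n, A) →ₐ[F] F, ψ.comp (TS F A n).val = φ := by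
  have := permInv F A n
  have hint : Algebra.IsIntegral (TS F A n) (⨂[F] _ : Fin n, A) :=
    Algebra.IsInvariant.isIntegral _ _ (Equiv.Perm (Fin n))
  have hmax : (RingHom.ker φ).IsMaximal :=
    RingHom.ker_isMaximal_of_surjective φ fun x => ⟨algebraMap F _ x, by simp⟩
  obtain ⟨Q, hQ, hQφ⟩ := Ideal.exists_ideal_over_maximal_of_isIntegral
    (S := ⨂[F] _ : Fin n, A) (RingHom.ker φ) (by
      intro x hx
      have : x = 0 := Subtype.ext hx
      simp [this])
  let _ : Field ((⨂[F] _ : Fin n, A) ⧸ Q) := Ideal.Quotient.field Q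
  have hmem : ∀ s : TS F A n, φ s = 0 → (s : ⨂[F] _ : Fin n, A) ∈ Q := by
    intro s hs
    have : s ∈ Q.comap (algebraMap (TS F A n) _) := by rw [hQφ]; exact hs
    exact this
  have hmk : ∀ s : TS F A n, Ideal.Quotient.mk Q (s : ⨂[F] _ : Fin n, A) =
      algebraMap F _ (φ s) := by
    intro s
    have := hmem (s - algebraMap F _ (φ s)) (by simp)
    exact (Ideal.Quotient.mk_eq_mk_iff_sub_mem _ _).2 this
  have h1 : ((algebraMap F ((⨂[F] _ : Fin n, A) ⧸ Q)).comp (φ : TS F A n →+* F)).IsIntegral := by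
    have h2 : ((Ideal.Quotient.mk Q).comp (algebraMap (TS F A n) (⨂[F] _ : Fin n, A))).IsIntegral :=
      RingHom.IsIntegral.trans _ _ (fun x => hint.isIntegral x)
        (RingHom.isIntegral_of_surjective _ Ideal.Quotient.mk_surjective)
    convert h2 using 1
    ext s
    exact (hmk s).symm
  have h3 : Algebra.IsIntegral F ((⨂[F] _ : Fin n, A) ⧸ Q) :=
    ⟨RingHom.IsIntegral.tower_top _ _ h1⟩
  have hb := IsAlgClosed.algebraMap_bijective_of_isIntegral (k := F)
    (K := (⨂[F] _ : Fin n, A) ⧸ Q)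
  let e := (AlgEquiv.ofBijective (Algebra.ofId F ((⨂[F] _ : Fin n, A) ⧸ Q)) hb)
  refine ⟨(e.symm : _ →ₐ[F] F).comp (Ideal.Quotient.mkₐ F Q), AlgHom.ext fun s => ?_⟩
  change e.symm (Ideal.Quotient.mk Q (s : ⨂[F] _ : Fin n, A)) = φ s
  rw [hmk, AlgEquiv.symm_apply_eq]
  rfl

/-- **Points of the symmetric product.** Over an algebraically closed field `F`, the map
sending an `n`-tuple `(χ_1, …, χ_n)` of characters of a finitely generated commutative
`F`-algebra `A` to the restriction of `χ_1 ⊗ ⋯ ⊗ χ_n` to `TS^n_F(A)` is surjective, and two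
tuples have the same image iff they differ by a permutation; i.e. it induces a well-defined
bijection from `(AlgHom_F(A,F))^n / S_n` onto `AlgHom_F(TS^n_F(A), F)`. -/
theorem ts_points_eq_tuples_of_characters_up_to_permutation [Algebra.FiniteType F A] :
    Function.Surjective
        (fun χ : Fin n → (A →ₐ[F] F) => (tensorChar F A n χ).comp (TS F A n).val) ∧
      ∀ χ χ' : Fin n → (A →ₐ[F] F),
        (tensorChar F A n χ).comp (TS F A n).val = (tensorChar F A n χ').comp (TS F A n).val
          ↔ ∃ σ : Equiv.Perm (Fin n), χ' = χ ∘ σ := by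
  constructor
  · intro φ
    obtain ⟨ψ, hψ⟩ := exists_ext F A n φ
    exact ⟨fun i => ψ.comp (sg F A n i), by simpa only [eq_tensorChar] using hψ⟩
  · intro χ χ'
    constructor
    · intro h
      have := permInv F A n
      have := permComm F A n
      have h1 : (RingHom.ker (tensorChar F A n χ)).IsPrime := RingHom.ker_isPrime _
      have h2 : (RingHom.ker (tensorChar F A n χ')).IsPrime := RingHom.ker_isPrime _
      obtain ⟨σ, hσ⟩ := Algebra.IsInvariant.exists_smul_of_under_eq (TS F A n)
        (⨂[F] _ : Fin n, A) (Equiv.Perm (Fin n)) (RingHom.ker (tensorChar F A n χ))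
        (RingHom.ker (tensorChar F A n χ')) (by
          ext s
          have := DFunLike.congr_fun h s
          change tensorChar F A n χ s = tensorChar F A n χ' s at this
          change tensorChar F A n χ s = 0 ↔ tensorChar F A n χ' s = 0
          rw [this])
      have key : tensorChar F A n χ = (tensorChar F A n χ').comp (permHom F A n σ⁻¹) := by
        refine eq_of_ker_le F _ _ fun x hx => ?_
        have h1 : σ • x ∈ RingHom.ker (tensorChar F A n χ') := by
          rw [hσ]
          exact Ideal.smul_mem_pointwise_smul σ x _ hx
        exact h1
      rw [tensorChar_perm] at key
      refine ⟨σ⁻¹, funext fun i => AlgHom.ext fun a => ?_⟩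
      have := DFunLike.congr_fun key (sg F A n (σ⁻¹ i) a)
      rw [tensorChar_single, tensorChar_single] at this
      rw [Function.comp_apply, Equiv.symm_apply_apply] at this
      exact this.symm
    · rintro ⟨σ, rfl⟩
      have h := tensorChar_perm F A n χ σ⁻¹
      refine AlgHom.ext fun s => ?_
      have h2 := DFunLike.congr_fun h (s : ⨂[F] _ : Fin n, A)
      rw [AlgHom.comp_apply, s.2 σ⁻¹] at h2
      exact h2

end SymmetricProduct
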